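/- arXiv:1311.1779 — 2 statements merged into one kernel-verified Lean document; each statement's English description precedes it below -/
import Mathlib

section
/- Let q be a prime power, n ≥ 2, 1 ≤ k < n with gcd(k, n−k) = 1, and a, b nonnegative integers with a·k − b·(n−k) = 1. Let K = F_{q^n}(z) be the rational function field and Ω an algebraic closure of K. Let u ∈ Ω be a root of the polynomial Tr_{n−k}(T) − z·Tr_k(T)^{q^{n−k}} − a + b·z ∈ K[T], and let f(T) = −z^{−1}·Tr_{n−k}(T) + Tr_k(T)^{q^{n−k}} ∈ K[T]. Then the normal closure (Galois closure) of K(u)/K inside Ω equals the compositum of K(u) with the intermediate field generated over K by all roots of f in Ω. -/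
/-- The trace polynomial `Tr_i(x) = x + x^q + ⋯ + x^{q^{i-1}}`. -/
def Tr {R : Type*} [CommRing R] (q i : ℕ) (x : R) : R :=
  ∑ j ∈ Finset.range i, x ^ q ^ j

open Polynomial in
lemma aux_key {K Ω : Type*} [Field K] [Field Ω] [Algebra K Ω] [Normal K Ω] (u : Ω) (P : K[X])
    (hP : Irreducible P) (V : Set Ω) (hu : aeval u P = 0)
    (hV : ∀ t, aeval t P = 0 ↔ t - u ∈ V) :
    IntermediateField.normalClosure K (IntermediateField.adjoin K {u}) Ω
      = IntermediateField.adjoin K {u} ⊔ IntermediateField.adjoin K V := by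
  apply le_antisymm
  · rw [IntermediateField.normalClosure_def']
    refine iSup_le fun σ => ?_
    rw [IntermediateField.adjoin_map, IntermediateField.adjoin_le_iff]
    rw [Set.image_singleton, Set.singleton_subset_iff]
    have h1 : aeval (σ u) P = 0 := by rw [aeval_algHom_apply, hu, map_zero]
    have h2 := (hV _).1 h1
    have h3 : σ u = u + (σ u - u) := by ring
    show σ u ∈ _
    rw [h3]
    refine add_mem ?_ ?_
    · exact (le_sup_left : IntermediateField.adjoin K {u} ≤ _)
        (IntermediateField.mem_adjoin_simple_self K u)
    · exact (le_sup_right : IntermediateField.adjoin K V ≤ _)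
        (IntermediateField.subset_adjoin K V h2)
  · have hu' : u ∈ IntermediateField.normalClosure K (IntermediateField.adjoin K {u}) Ω :=
      IntermediateField.le_normalClosure _ (IntermediateField.mem_adjoin_simple_self K u)
    refine sup_le (IntermediateField.le_normalClosure _) ?_
    rw [IntermediateField.adjoin_le_iff]
    intro v hv
    have h1 : aeval (u + v) P = 0 := (hV _).2 (by simpa using hv)
    have h2 : aeval (u + v) (minpoly K u) = 0 := by
      rw [← minpoly.eq_of_irreducible hP hu, map_mul, h1, zero_mul]
    obtain ⟨σ, hσ⟩ := IntermediateField.exists_algHom_of_splits_of_aeval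
      (fun x : Ω => normal_iff.mp (inferInstanceAs (Normal K Ω)) x) h2
    have h3 : u + v ∈ IntermediateField.normalClosure K (IntermediateField.adjoin K {u}) Ω := by
      rw [IntermediateField.normalClosure_def']
      refine (le_iSup (fun f : Ω →ₐ[K] Ω => (IntermediateField.adjoin K {u}).map f) σ) ?_
      exact ⟨u, IntermediateField.mem_adjoin_simple_self K u, hσ⟩
    simpa using sub_mem h3 hu'

lemma aux_Tr_map {R S : Type*} [CommRing R] [CommRing S] (f : R →+* S) (q i : ℕ) (x : R) :
    f (Tr q i x) = Tr q i (f x) := by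
  simp [Tr]

lemma aux_Tr_add {R : Type*} [CommRing R] (p e : ℕ) [Fact p.Prime] [CharP R p] (i : ℕ) (x y : R) :
    Tr (p ^ e) i (x + y) = Tr (p ^ e) i x + Tr (p ^ e) i y := by
  simp only [Tr, ← pow_mul, add_pow_char_pow, Finset.sum_add_distrib]

lemma aux_nat_pow {R : Type*} [CommRing R] (p : ℕ) [Fact p.Prime] [CharP R p] (j c : ℕ) :
    (c : R) ^ p ^ j = c := by
  induction c with
  | zero => simp [(Fact.out : p.Prime).ne_zero]
  | succ c ih => push_cast; rw [add_pow_char_pow, ih, one_pow]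

lemma aux_Tr_nat {R : Type*} [CommRing R] (p e : ℕ) [Fact p.Prime] [CharP R p] (i c : ℕ) :
    Tr (p ^ e) i (c : R) = i * c := by
  simp [Tr, ← pow_mul, aux_nat_pow]

lemma aux_Tr_comm {R : Type*} [CommRing R] (p e : ℕ) [Fact p.Prime] [CharP R p] (i j : ℕ) (x : R) :
    Tr (p ^ e) i (Tr (p ^ e) j x) = Tr (p ^ e) j (Tr (p ^ e) i x) := by
  simp only [Tr, ← pow_mul, sum_pow_char_pow]
  rw [Finset.sum_comm]
  simp only [← pow_mul, mul_comm]

open Polynomial in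
lemma aux_coprime {F : Type*} [Field F] (p e k m a b : ℕ) [Fact p.Prime] [CharP F p]
    (hab : a * k = b * m + 1) :
    IsCoprime ((b : F[X]) - (Tr (p ^ e) k X) ^ (p ^ e) ^ m) (Tr (p ^ e) m X - (a : F[X])) := by
  haveI : CharP (AlgebraicClosure F) p := charP_of_injective_algebraMap'  F p
  rw [Polynomial.isCoprime_iff_aeval_ne_zero_of_isAlgClosed F (AlgebraicClosure F)]
  intro t
  by_contra! h
  obtain ⟨h1, h2⟩ := h
  have ht (i : ℕ) : aeval t (Tr (p ^ e) i (X : F[X])) = Tr (p ^ e) i t := by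
    simp [Tr]
  simp only [map_sub, map_pow, map_natCast, ht, sub_eq_zero] at h1 h2
  have h3 : Tr (p ^ e) k t = b := by
    rw [← aux_nat_pow (R := AlgebraicClosure F) p (e * m) b, pow_mul] at h1
    rw [← pow_mul] at h1
    exact (iterateFrobenius_inj (AlgebraicClosure F) p (e * m) 
      (by rw [iterateFrobenius_def, iterateFrobenius_def]; exact h1)).symm
  have h4 := aux_Tr_comm p e k m t
  rw [h3, h2, aux_Tr_nat, aux_Tr_nat] at h4
  have h5 : ((a * k : ℕ) : AlgebraicClosure F) = ((b * m + 1 : ℕ) : AlgebraicClosure F) := by rw [hab]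
  push_cast at h5
  have : (1 : AlgebraicClosure F) = 0 := by linear_combination h4 - h5
  exact one_ne_zero this

open Polynomial in
lemma aux_irred {F Ω : Type*} [Field F] [Field Ω] [Algebra (RatFunc F) Ω] (A B : F[X])
    (hB : B ≠ 0) (h : IsCoprime B A) (u : Ω)
    (hu : aeval u (A.map (algebraMap F (RatFunc F)) + C RatFunc.X * B.map (algebraMap F (RatFunc F))) = 0) :
    Irreducible (A.map (algebraMap F (RatFunc F)) + C RatFunc.X * B.map (algebraMap F (RatFunc F))) := by
  have h1 : Irreducible (C B * X + C A : F[X][X]) := irreducible_C_mul_X_add_C hB h.isRelPrime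
  have h2 := (MulEquiv.irreducible_iff (Bivariate.swap (R := F))).2 h1
  simp only [map_add, map_mul, Bivariate.swap_C, Bivariate.swap_Y] at h2
  set Q := B.map C * C (X : F[X]) + A.map C with hQ
  have hm : Q.map (algebraMap F[X] (RatFunc F)) = (A.map (algebraMap F (RatFunc F)) + C RatFunc.X * B.map (algebraMap F (RatFunc F))) := by
    simp only [hQ, Polynomial.map_add, Polynomial.map_mul, Polynomial.map_map, map_C, RatFunc.algebraMap_X]
    have : (algebraMap F[X] (RatFunc F)).comp C = algebraMap F (RatFunc F) := by
      ext x; simp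
    rw [this]; ring
  rw [← hm] at hu ⊢
  refine (IsPrimitive.irreducible_iff_irreducible_map_fraction_map ?_).1 h2
  refine h2.isPrimitive fun hd => ?_
  obtain ⟨c, hc⟩ := natDegree_eq_zero.1 hd
  rw [← hc] at hu
  simp only [map_C, aeval_C, map_eq_zero, FaithfulSMul.algebraMap_eq_zero_iff] at hu
  rw [← hc, hu] at h2
  simp at h2

set_option synthInstance.maxHeartbeats 1000000

/-- Over `K = F_{q^n}(z)` with algebraic closure `Ω`, if `u ∈ Ω` is a root of
`Tr_{n−k}(T) − z·Tr_k(T)^{q^{n−k}} − a + b·z`, then the Galois (normal) closure of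
`K(u)/K` inside `Ω` equals the compositum of `K(u)` with the field generated over `K` by
all roots of `f(T) = −z^{−1}·Tr_{n−k}(T) + Tr_k(T)^{q^{n−k}}`. -/
theorem stmt_12 (p e q n k a b : ℕ) (hp : p.Prime) (he : 0 < e) (hq : q = p ^ e)
    (hn : 2 ≤ n) (hk1 : 1 ≤ k) (hkn : k < n) (hgcd : Nat.gcd k (n - k) = 1)
    (hab : a * k = b * (n - k) + 1)
    (F : Type*) [Field F] [Fintype F] (hF : Fintype.card F = q ^ n)
    (Ω : Type*) [Field Ω] [Algebra (RatFunc F) Ω] [IsAlgClosure (RatFunc F) Ω]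
    (z : Ω) (hz : z = algebraMap (RatFunc F) Ω RatFunc.X)
    (u : Ω) (hu : Tr q (n - k) u - z * (Tr q k u) ^ q ^ (n - k) - (a : Ω) + (b : Ω) * z = 0) :
    IntermediateField.normalClosure (RatFunc F) (IntermediateField.adjoin (RatFunc F) {u}) Ω
      = IntermediateField.adjoin (RatFunc F) {u}
        ⊔ IntermediateField.adjoin (RatFunc F)
            {t : Ω | -z⁻¹ * Tr q (n - k) t + (Tr q k t) ^ q ^ (n - k) = 0} := by
  haveI : Fact p.Prime := ⟨hp⟩
  subst hq
  haveI hcF : CharP F p := by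
    have : Fintype.card F = p ^ (e * n) := by rw [hF, pow_mul]
    exact charP_of_card_eq_prime_pow this
  haveI hcK : CharP (RatFunc F) p := charP_of_injective_algebraMap' F p
  haveI hcO : CharP Ω p := charP_of_injective_algebraMap' (RatFunc F) p
  haveI : Normal (RatFunc F) Ω := IsAlgClosure.normal _ _
  have hz0 : z ≠ 0 := by
    rw [hz]; simpa using RatFunc.X_ne_zero
  set m := n - k with hm
  let A : Polynomial F := Tr (p ^ e) m Polynomial.X - (a : Polynomial F)
  let B : Polynomial F := (b : Polynomial F) - (Tr (p ^ e) k Polynomial.X) ^ (p ^ e) ^ m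
  have hco : IsCoprime B A := aux_coprime p e k m a b hab
  have hTr (i : ℕ) (t : Ω) : Polynomial.eval₂ ((algebraMap (RatFunc F) Ω).comp (algebraMap F (RatFunc F))) t
      (Tr (p ^ e) i Polynomial.X) = Tr (p ^ e) i t := by
    simp [Tr, Polynomial.eval₂_finset_sum]
  have hev (t : Ω) : Polynomial.aeval t (A.map (algebraMap F (RatFunc F)) +
      Polynomial.C RatFunc.X * B.map (algebraMap F (RatFunc F))) =
      Tr (p ^ e) m t - z * (Tr (p ^ e) k t) ^ (p ^ e) ^ m - (a : Ω) + (b : Ω) * z := by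
    simp only [A, B, map_add, map_mul, Polynomial.aeval_C, ← hz, Polynomial.aeval_def,
      Polynomial.eval₂_map, Polynomial.eval₂_sub, Polynomial.eval₂_pow, Polynomial.eval₂_natCast, hTr,
      Polynomial.eval₂_add, Polynomial.eval₂_mul, Polynomial.eval₂_C]
    ring
  have hB : B ≠ 0 := by
    intro h0
    have h1 : (Tr (p ^ e) k Polynomial.X : Polynomial F) ^ (p ^ e) ^ m = (b : Polynomial F) :=
      (sub_eq_zero.1 h0).symm
    have h2 := congrArg Polynomial.natDegree h1
    have hq0 : p ^ e ≠ 0 := pow_ne_zero _ hp.ne_zero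
    rw [Polynomial.natDegree_pow, Polynomial.natDegree_natCast, mul_eq_zero,
      or_iff_right (pow_ne_zero _ hq0)] at h2
    have h3 : (Tr (p ^ e) k Polynomial.X : Polynomial F).coeff 1 = 0 :=
      Polynomial.coeff_eq_zero_of_natDegree_lt (by omega)
    have hq1 : 1 < p ^ e := Nat.one_lt_pow he.ne' hp.one_lt
    rw [Tr, Polynomial.finsetSum_coeff, Finset.sum_eq_single 0] at h3
    · simp at h3
    · intro j _ hj
      rw [Polynomial.coeff_X_pow, if_neg (Nat.one_lt_pow hj hq1).ne]
    · intro h; exact absurd (Finset.mem_range.2 hk1) h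
  refine aux_key u _ (aux_irred A B hB hco u (by rw [hev]; exact hu)) _ (by rw [hev]; exact hu) ?_
  intro t
  rw [hev, Set.mem_setOf_eq]
  obtain ⟨v, rfl⟩ : ∃ v, t = u + v := ⟨t - u, by ring⟩
  rw [add_sub_cancel_left, aux_Tr_add, aux_Tr_add]
  have h1 : (Tr (p ^ e) k u + Tr (p ^ e) k v) ^ (p ^ e) ^ m =
      Tr (p ^ e) k u ^ (p ^ e) ^ m + Tr (p ^ e) k v ^ (p ^ e) ^ m := by
    rw [← pow_mul, add_pow_char_pow]
  rw [h1]
  constructor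
  · intro h
    field_simp
    linear_combination hu - h
  · intro h
    field_simp at h
    linear_combination hu - h
end

section
/- Let F be a field of characteristic p containing F_q, where q is a power of p. Let h(X) = Σ_{i=0}^{m} a_i X^{q^i} ∈ F[X] be a q-additive polynomial with a_0 ≠ 0 and a_m ≠ 0, and assume that all roots of h lie in F. Let M/F be a field extension, c ∈ F, and u ∈ M a root of h(X) − c. Then F(u)/F is a Galois extension, its Galois group is abelian, and every element σ of Gal(F(u)/F) satisfies σ^p = id (i.e., the Galois group is an elementary abelian p-group). -/
set_option synthInstance.maxHeartbeats 1000000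

open Polynomial in
theorem aux_aeval_sub (p e q m : ℕ) (hp : p.Prime) (hq : q = p ^ e)
    {F A : Type*} [Field F] [CommRing A] [CharP A p] [Algebra F A] (a : ℕ → F) (h : F[X])
    (hh : h = ∑ i ∈ Finset.range (m + 1), C (a i) * X ^ q ^ i) (x y : A) :
    aeval (x - y) h = aeval x h - aeval y h := by
  have := Fact.mk hp
  subst hh hq
  simp only [map_sum, map_mul, map_pow, aeval_X, aeval_C]
  rw [← Finset.sum_sub_distrib]
  refine Finset.sum_congr rfl fun i _ => ?_
  rw [← pow_mul, sub_pow_char_pow, mul_sub]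

open Polynomial in
theorem aux_derivative (p e q m : ℕ) (he : 0 < e) (hq : q = p ^ e)
    {F : Type*} [Field F] [CharP F p] (a : ℕ → F) (h : F[X])
    (hh : h = ∑ i ∈ Finset.range (m + 1), C (a i) * X ^ q ^ i) :
    derivative h = C (a 0) := by
  have hq0 : (q : F) = 0 := by
    rw [hq, Nat.cast_pow, CharP.cast_eq_zero, zero_pow he.ne']
  subst hh
  rw [Finset.sum_range_succ', derivative_add, derivative_sum, Finset.sum_eq_zero]
  · simp
  · intro i _
    rw [derivative_C_mul, derivative_X_pow, Nat.cast_pow, hq0]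
    simp

open Polynomial in
theorem aux_main (p e q m : ℕ) (hp : p.Prime) (he : 0 < e) (hq : q = p ^ e)
    {F K : Type*} [Field F] [CharP F p] [Field K] [Algebra F K]
    (a : ℕ → F) (h : F[X])
    (hh : h = ∑ i ∈ Finset.range (m + 1), C (a i) * X ^ q ^ i)
    (ha0 : a 0 ≠ 0) (hsplit : h.Splits) (c : F) (pb : PowerBasis F K)
    (hu : aeval pb.gen h = algebraMap F K c) :
    IsGalois F K ∧ (∀ σ τ : K ≃ₐ[F] K, σ * τ = τ * σ) ∧ (∀ σ : K ≃ₐ[F] K, σ ^ p = 1) := by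
  have : CharP K p := charP_of_injective_algebraMap (algebraMap F K).injective p
  have hder := aux_derivative p e q m he hq a h hh
  have hh0 : h ≠ 0 := by
    rintro h0
    rw [h0, derivative_zero] at hder
    exact ha0 (C_eq_zero.mp hder.symm)
  have hgder : derivative (h - C c) = C (a 0) := by simp [hder]
  have hg0 : h - C c ≠ 0 := by
    rintro h0
    rw [h0, derivative_zero] at hgder
    exact ha0 (C_eq_zero.mp hgder.symm)
  have hsep : (h - C c).Separable := by
    rw [separable_def, hgder]
    obtain ⟨b, hb⟩ := ((isUnit_C.mpr (isUnit_iff_ne_zero.mpr ha0))).exists_left_inv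
    exact ⟨0, b, by rw [hb]; simp⟩
  have key : ∀ σ : K ≃ₐ[F] K, ∃ v : F, σ pb.gen = pb.gen + algebraMap F K v := by
    intro σ
    have h1 : aeval (σ pb.gen - pb.gen) h = 0 := by
      rw [aux_aeval_sub p e q m hp hq a h hh, hu, show aeval (σ pb.gen) h = σ (aeval pb.gen h) from aeval_algHom_apply (σ : K →ₐ[F] K) _ _,
        hu, σ.commutes, sub_self]
    obtain ⟨v, hv⟩ := hsplit.mem_range_of_isRoot (i := algebraMap F K) hh0
      (x := σ pb.gen - pb.gen) (by rw [IsRoot, eval_map_algebraMap]; exact h1)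
    exact ⟨v, by rw [hv]; ring⟩
  have ext : ∀ σ τ : K ≃ₐ[F] K, σ pb.gen = τ pb.gen → σ = τ := by
    intro σ τ hst
    have := pb.algHom_ext (f := (σ : K →ₐ[F] K)) (g := (τ : K →ₐ[F] K)) hst
    ext x
    exact DFunLike.congr_fun this x
  refine ⟨?_, ?_, ?_⟩
  · have : (h - C c).IsSplittingField F K := by
      constructor
      · have h2 : (h - C c).map (algebraMap F K) =
            (h.map (algebraMap F K)).comp (X - C pb.gen) := by
          have h3 := aux_aeval_sub p e q m hp hq a h hh (X : K[X]) (C pb.gen)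
          have h4 : aeval (C pb.gen : K[X]) h = C (algebraMap F K c) := by
            rw [← hu]
            exact aeval_algebraMap_apply K[X] pb.gen h
          have h5 : ∀ r : K[X], (h.map (algebraMap F K)).comp r = aeval r h := by
            intro r
            rw [comp, eval₂_map, aeval_def]
            rfl
          rw [h5, h3, h4, ← h5, comp_X]
          simp
        rw [h2]
        exact (hsplit.map _).comp_X_sub_C _
      · rw [eq_top_iff, ← pb.adjoin_gen_eq_top]
        apply Algebra.adjoin_mono
        rw [Set.singleton_subset_iff, mem_rootSet]
        exact ⟨hg0, by simp [hu]⟩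
    exact IsGalois.of_separable_splitting_field hsep
  · intro σ τ
    apply ext
    obtain ⟨v, hv⟩ := key σ
    obtain ⟨w, hw⟩ := key τ
    simp only [AlgEquiv.mul_apply, hv, hw, map_add, AlgEquiv.commutes]
    ring
  · intro σ
    apply ext
    obtain ⟨v, hv⟩ := key σ
    have : ∀ n : ℕ, (σ ^ n) pb.gen = pb.gen + n * algebraMap F K v := by
      intro n
      induction n with
      | zero => simp
      | succ n ih =>
        rw [pow_succ, AlgEquiv.mul_apply, hv, map_add, ih, AlgEquiv.commutes]
        push_cast
        ring
    rw [this, CharP.cast_eq_zero]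
    simp

/-- Let `F ⊇ F_q` be a field of characteristic `p`, and let
`h(X) = Σ_{i=0}^m a_i X^{q^i}` be a `q`-additive polynomial with `a_0 ≠ 0`, `a_m ≠ 0`,
all of whose roots lie in `F`. If `u` is a root of `h(X) − c` (with `c ∈ F`) in an
extension `M/F`, then `F(u)/F` is Galois with an elementary abelian `p`-group as Galois
group. -/
theorem stmt_18 (p e q m : ℕ) (hp : p.Prime) (he : 0 < e) (hq : q = p ^ e)
    (Fq : Type*) [Field Fq] [Fintype Fq] (hFq : Fintype.card Fq = q)
    (F : Type*) [Field F] [CharP F p] [Algebra Fq F]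
    (M : Type*) [Field M] [Algebra F M]
    (a : ℕ → F) (h : Polynomial F)
    (hh : h = ∑ i ∈ Finset.range (m + 1), Polynomial.C (a i) * Polynomial.X ^ q ^ i)
    (ha0 : a 0 ≠ 0) (ham : a m ≠ 0)
    (hsplit : (h.map (RingHom.id F)).Splits)
    (c : F) (u : M) (hu : Polynomial.aeval u h = algebraMap F M c) :
    IsGalois F (IntermediateField.adjoin F {u}) ∧
    (∀ σ τ : (IntermediateField.adjoin F {u} : IntermediateField F M) ≃ₐ[F]
              (IntermediateField.adjoin F {u} : IntermediateField F M), σ * τ = τ * σ) ∧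
    (∀ σ : (IntermediateField.adjoin F {u} : IntermediateField F M) ≃ₐ[F]
              (IntermediateField.adjoin F {u} : IntermediateField F M), σ ^ p = 1) := by
  have hcd := aux_derivative p e q m he hq a h hh
  have hg0 : h - Polynomial.C c ≠ 0 := by
    rintro h0
    have := congrArg Polynomial.derivative h0
    rw [Polynomial.derivative_sub, hcd] at this
    simp [ha0] at this
  have hint : IsIntegral F u := by
    apply IsAlgebraic.isIntegral
    exact ⟨h - Polynomial.C c, hg0, by simp [hu]⟩
  rw [Polynomial.map_id] at hsplit
  refine aux_main p e q m hp he hq a h hh ha0 hsplit c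
    (IntermediateField.adjoin.powerBasis hint) ?_
  rw [IntermediateField.adjoin.powerBasis_gen]
  apply (algebraMap (IntermediateField.adjoin F {u}) M).injective
  rw [← Polynomial.aeval_algebraMap_apply, IntermediateField.AdjoinSimple.algebraMap_gen, hu]
  rfl
end
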